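/- Increment bound for Ψ_k^K (Lemma 6). Let α, b > 0, β ∈ (0,1), and α_j := α(j+b)^{−β}. Let c ∈ (0,1] and let A be an invertible n×n real matrix such that ‖I − α_j A‖∞ ≤ 1 − cα_j for all j ≥ 0, ‖A^{-1}‖∞ ≤ 1/c, and ‖A‖∞ ≤ 2. Then there exists a constant C > 0 depending only on α, b, and β such that for all integers k and K with c^{−1/(β(1−β))} ≤ k and k + 1 ≤ K: ‖Ψ_{k+1}^K − Ψ_k^K‖∞ ≤ C/k^β. -/

import Mathlib

open Finset

/-- ℓ∞→ℓ∞ operator norm of a matrix: maximum absolute row sum. -/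
noncomputable def normInf {n : Type*} [Fintype n] [Nonempty n] (M : Matrix n n ℝ) : ℝ :=
  Finset.univ.sup' Finset.univ_nonempty (fun i => ∑ j, |M i j|)

/-- The matrix product ∏_{j=a}^{b-1} (I - α_j A), taken over the index range [a, b)
(empty products equal the identity; all factors commute, so the order is immaterial). -/
noncomputable def prodIco {n : Type*} [Fintype n] [DecidableEq n]
    (A : Matrix n n ℝ) (α : ℕ → ℝ) (a b : ℕ) : Matrix n n ℝ :=
  ((List.range' a (b - a)).map (fun j => (1 : Matrix n n ℝ) - α j • A)).prod

/-- Ψ_i^K := α_i ∑_{k=i+1}^{K} ∏_{j=i+1}^{k-1} (I - α_j A). -/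
noncomputable def Psi {n : Type*} [Fintype n] [DecidableEq n]
    (A : Matrix n n ℝ) (α : ℕ → ℝ) (i K : ℕ) : Matrix n n ℝ :=
  α i • ∑ k ∈ Finset.Icc (i + 1) K, prodIco A α (i + 1) k


lemma scal_inv (v p : ℕ → ℝ) (g B : ℝ) (hv0 : ∀ m, 0 < v m) (hmono : ∀ m, v m ≤ v (m+1))
    (hp0 : p 0 = 1) (hp : ∀ m, p (m+1) = p m * (1 - g / v m)) (hg : 0 ≤ g)
    (hq : ∀ m, 0 ≤ 1 - g / v m) (hB : v 0 ≤ B)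
    (hd : ∀ m, 2 * (v (m+1) - v m) ≤ g ∨ v (m+1) ≤ B) :
    ∀ m, (0 ≤ p m ∧ p m ≤ 1) ∧ v m * p m + ∑ l ∈ Finset.range m, (v (l+1) - v l) * p (l+1) ≤ 2 * B := by
  have h1 : ∀ m, 0 ≤ p m ∧ p m ≤ 1 := by
    intro m
    induction m with
    | zero => simp [hp0]
    | succ m ih =>
      rw [hp]
      have : 0 ≤ g / v m := div_nonneg hg (hv0 m).le
      exact ⟨mul_nonneg ih.1 (hq m), mul_le_one₀ ih.2 (hq m) (by linarith)⟩
  have h2 : ∀ m, ∑ l ∈ Finset.range m, (v (l+1) - v l) * p (l+1) ≤ v m - v 0 := by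
    intro m
    rw [← Finset.sum_range_sub]
    apply Finset.sum_le_sum
    intro l _
    have := hmono l
    exact mul_le_of_le_one_right (by linarith) (h1 _).2
  intro m
  refine ⟨h1 m, ?_⟩
  induction m with
  | zero => simp [hp0]; have := hv0 0; linarith
  | succ m ih =>
    rcases hd m with h | h
    · rw [Finset.sum_range_succ]
      have e : v m * p (m+1) = v m * p m - g * p m := by
        rw [hp]; have := (hv0 m).ne'; field_simp
      have hle : p (m+1) ≤ p m := by
        rw [hp]
        have : 0 ≤ g / v m := div_nonneg hg (hv0 m).le
        exact mul_le_of_le_one_right (h1 m).1 (by linarith)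
      have h3 : 2 * (v (m+1) - v m) * p (m+1) ≤ g * p m :=
        mul_le_mul h hle (h1 _).1 hg
      nlinarith
    · have h3 := h2 (m+1)
      have h4 : v (m+1) * p (m+1) ≤ v (m+1) :=
        mul_le_of_le_one_right (hv0 _).le (h1 _).2
      have := hv0 0
      linarith

lemma mat_bound {E : Type*} [NormedRing E] [NormedAlgebra ℝ E] (h1 : ‖(1:E)‖ ≤ 1) (A : E)
    (v : ℕ → ℝ) (R : ℕ → E) (p : ℕ → ℝ) (a B : ℝ)
    (hv0 : ∀ m, 0 < v m) (hmono : ∀ m, v m ≤ v (m+1)) (hR0 : R 0 = 1)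
    (hR : ∀ m, R (m+1) = (1 - (a / v m) • A) * R m) (hp0 : p 0 = 1)
    (hp : ∀ m, 0 ≤ p m)
    (hpR : ∀ m, ‖1 - (a / v m) • A‖ * p m ≤ p (m+1)) (m : ℕ)
    (hB : v m * p m + ∑ l ∈ Finset.range m, (v (l+1) - v l) * p (l+1) ≤ B) :
    ‖a • (A * ∑ l ∈ Finset.range m, R l)‖ ≤ v 0 + B := by
  have hn : ∀ m, ‖R m‖ ≤ p m := by
    intro m
    induction m with
    | zero => rw [hR0, hp0]; exact h1
    | succ m ih =>
      rw [hR]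
      exact (norm_mul_le _ _).trans
        ((mul_le_mul_of_nonneg_left ih (norm_nonneg _)).trans (hpR m))
  have key : ∀ m, a • (A * ∑ l ∈ Finset.range m, R l)
      = v 0 • (1:E) - v m • R m + ∑ l ∈ Finset.range m, (v (l+1) - v l) • R (l+1) := by
    intro m
    induction m with
    | zero => simp [hR0]
    | succ m ih =>
      rw [Finset.sum_range_succ, Finset.sum_range_succ, mul_add, smul_add, ih]
      have e : v m • R (m+1) = v m • R m - a • (A * R m) := by
        rw [hR, sub_mul, one_mul, smul_sub, smul_mul_assoc, smul_smul,
          mul_div_cancel₀ _ (hv0 m).ne']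
      rw [sub_smul, e]
      abel
  rw [key]
  have hs : ‖∑ l ∈ Finset.range m, (v (l+1) - v l) • R (l+1)‖ ≤
      ∑ l ∈ Finset.range m, (v (l+1) - v l) * p (l+1) := by
    apply norm_sum_le_of_le
    intro l _
    have := hmono l
    rw [norm_smul, Real.norm_of_nonneg (by linarith)]
    exact mul_le_mul_of_nonneg_left (hn _) (by linarith)
  have ha : ‖v 0 • (1:E)‖ ≤ v 0 := by
    rw [norm_smul, Real.norm_of_nonneg (hv0 0).le]
    exact mul_le_of_le_one_right (hv0 0).le h1
  have hb : ‖v m • R m‖ ≤ v m * p m := by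
    rw [norm_smul, Real.norm_of_nonneg (hv0 m).le]
    exact mul_le_mul_of_nonneg_left (hn _) (hv0 m).le
  calc _ ≤ ‖v 0 • (1:E)‖ + ‖v m • R m‖ + ‖∑ l ∈ Finset.range m, (v (l+1) - v l) • R (l+1)‖ :=
        (norm_add_le _ _).trans (by gcongr; exact norm_sub_le _ _)
    _ ≤ _ := by linarith

section
attribute [local instance] Matrix.linftyOpNormedRing Matrix.linftyOpNormedAlgebra

lemma normInf_eq {n : Type*} [Fintype n] [Nonempty n] [DecidableEq n] (M : Matrix n n ℝ) :
    normInf M = ‖M‖ := by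
  rw [Matrix.linfty_opNorm_def]
  unfold normInf
  rw [← Finset.sup'_eq_sup Finset.univ_nonempty]
  apply le_antisymm
  · apply Finset.sup'_le
    intro i hi
    have := Finset.le_sup' (fun i => ∑ j, ‖M i j‖₊) hi
    have h2 := NNReal.coe_le_coe.2 this
    simpa using h2
  · obtain ⟨i, hi, h⟩ := Finset.exists_mem_eq_sup' (Finset.univ_nonempty (α := n)) (fun i => ∑ j, ‖M i j‖₊)
    rw [h]
    have := Finset.le_sup' (fun i => ∑ j, |M i j|) hi
    refine le_trans (le_of_eq ?_) this
    simp

lemma normInf_one {n : Type*} [Fintype n] [Nonempty n] [DecidableEq n] :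
    ‖(1 : Matrix n n ℝ)‖ ≤ 1 := by
  rw [← normInf_eq]
  unfold normInf
  apply Finset.sup'_le
  intro i _
  simp [Matrix.one_apply, apply_ite abs]

lemma prodIco_zero {n : Type*} [Fintype n] [DecidableEq n]
    (A : Matrix n n ℝ) (α : ℕ → ℝ) (a : ℕ) : prodIco A α a (a + 0) = 1 := by
  simp [prodIco]

lemma prodIco_left {n : Type*} [Fintype n] [DecidableEq n]
    (A : Matrix n n ℝ) (α : ℕ → ℝ) (a m : ℕ) : prodIco A α a (a + (m+1)) =
      (1 - α a • A) * prodIco A α (a+1) (a+1+m) := by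
  simp [prodIco, List.range'_succ]

lemma prodIco_right {n : Type*} [Fintype n] [DecidableEq n]
    (A : Matrix n n ℝ) (α : ℕ → ℝ) (a m : ℕ) : prodIco A α a (a + (m+1)) =
      (1 - α (a+m) • A) * prodIco A α a (a+m) := by
  induction m generalizing a with
  | zero => rw [prodIco_left, prodIco_zero, prodIco_zero]; rfl
  | succ m ih =>
    rw [prodIco_left, ih, prodIco_left, ← mul_assoc, ← mul_assoc,
      show a + 1 + m = a + (m+1) by ring]
    congr 1
    have hc : Commute (1 - α a • A) (1 - α (a + (m+1)) • A) := by
      apply Commute.sub_left (Commute.one_left _)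
      apply Commute.sub_right (Commute.one_right _)
      exact ((Commute.refl A).smul_left _).smul_right _
    exact hc.eq

lemma Psi_eq {n : Type*} [Fintype n] [DecidableEq n]
    (A : Matrix n n ℝ) (α : ℕ → ℝ) (i m : ℕ) :
    Psi A α i (i+m) = α i • ∑ l ∈ Finset.range m, prodIco A α (i+1) (i+1+l) := by
  unfold Psi
  congr 1
  rw [← Finset.Ico_add_one_right_eq_Icc, Finset.sum_Ico_eq_sum_range]
  congr 2
  omega

lemma Psi_rec {n : Type*} [Fintype n] [DecidableEq n]
    (A : Matrix n n ℝ) (u : ℕ → ℝ) (a : ℝ) (hu : ∀ j, 0 < u j) (k m : ℕ) :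
    Psi A (fun j => a / u j) (k+1) (k+1+m) - Psi A (fun j => a / u j) k (k+1+m) =
     -(((u (k+1) - u k) / u k) • Psi A (fun j => a / u j) (k+1) (k+1+m)) -
      (a / u k) • (1 - A * Psi A (fun j => a / u j) (k+1) (k+1+m)) := by
  have h : Psi A (fun j => a / u j) k (k+1+m) = (a / u k) • (1 + (1 - (a / u (k+1)) • A) *
      ∑ l ∈ Finset.range m, prodIco A (fun j => a / u j) (k+1+1) (k+1+1+l)) := by
    rw [add_assoc k 1 m, add_comm 1 m, Psi_eq, Finset.sum_range_succ', prodIco_zero, Finset.mul_sum]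
    simp only [prodIco_left]
    rw [add_comm]
  rw [h, Psi_eq]
  generalize ∑ l ∈ Finset.range m, prodIco A (fun j => a / u j) (k+1+1) (k+1+1+l) = S
  have h1 := (hu k).ne'
  have h2 := (hu (k+1)).ne'
  simp only [sub_mul, one_mul, smul_mul_assoc, mul_smul_comm, smul_sub, smul_add, smul_smul]
  have e : (u (k+1) - u k) / u k * (a / u (k+1)) = a / u k - a / u (k+1) := by
    field_simp
  rw [e, sub_smul]
  abel

/-- Increment bound for Ψ_k^K (Lemma 6). -/
theorem increment_bound_Psi
    (α b β : ℝ) (hα : 0 < α) (hb : 0 < b) (hβ0 : 0 < β) (hβ1 : β < 1) :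
    ∃ C : ℝ, 0 < C ∧
      ∀ (n : Type) [Fintype n] [Nonempty n] [DecidableEq n],
        ∀ (A : Matrix n n ℝ) (c : ℝ), IsUnit A → 0 < c → c ≤ 1 →
          (∀ j : ℕ, normInf ((1 : Matrix n n ℝ)
              - (α * ((j : ℝ) + b) ^ (-β)) • A) ≤ 1 - c * (α * ((j : ℝ) + b) ^ (-β))) →
          normInf A⁻¹ ≤ 1 / c →
          normInf A ≤ 2 →
          ∀ k K : ℕ, c ^ (-1 / (β * (1 - β))) ≤ (k : ℝ) → k + 1 ≤ K →
            normInf (Psi A (fun j => α * ((j : ℝ) + b) ^ (-β)) (k + 1) K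
                - Psi A (fun j => α * ((j : ℝ) + b) ^ (-β)) k K) ≤
              C / (k : ℝ) ^ β := by
  set M : ℝ := (2 * β / α) ^ (1 / (1 - β)) with hM
  have hMpos : 0 < M := by positivity
  set D : ℝ := (M + 3 + b) ^ β with hD
  have hDpos : 0 < D := by positivity
  refine ⟨(1 + (1 + 3 * D)) + α * (1 + 3 * D), by positivity, ?_⟩
  intro n _ _ _ A c hA hc0 hc1 hstep hinv _ k K hk hK
  obtain ⟨m, rfl⟩ := Nat.exists_eq_add_of_le hK
  set u : ℕ → ℝ := fun j => ((j:ℝ) + b) ^ β with hu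
  have hx : ∀ j : ℕ, 0 < (j:ℝ) + b := fun j => by positivity
  have hu0 : ∀ j, 0 < u j := fun j => Real.rpow_pos_of_pos (hx j) _
  have hα' : ∀ j : ℕ, α * ((j:ℝ) + b) ^ (-β) = α / u j := by
    intro j
    rw [Real.rpow_neg (hx j).le, div_eq_mul_inv]
  simp only [hα', normInf_eq] at hstep hinv ⊢
  have hmono : ∀ j, u j ≤ u (j+1) := by
    intro j
    apply Real.rpow_le_rpow (hx j).le _ hβ0.le
    push_cast; linarith
  have hd : ∀ j : ℕ, u (j+1) - u j ≤ β * u j / ((j:ℝ) + b) := by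
    intro j
    have hxj := hx j
    have h := rpow_one_add_le_one_add_mul_self (s := 1 / ((j:ℝ)+b)) (p := β)
      (by have : 0 < 1 / ((j:ℝ)+b) := by positivity
          linarith) hβ0.le hβ1.le
    have e : u (j+1) = u j * (1 + 1 / ((j:ℝ)+b)) ^ β := by
      simp only [hu]
      rw [← Real.mul_rpow hxj.le (by positivity)]
      congr 1
      push_cast; field_simp; ring
    rw [e]
    have := mul_le_mul_of_nonneg_left h (hu0 j).le
    calc _ ≤ u j * (1 + β * (1 / ((j:ℝ)+b))) - u j := by linarith
      _ = _ := by ring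
  have hb1 : 0 < 1 - β := by linarith
  have hk1 : (1:ℝ) ≤ k := by
    refine le_trans ?_ hk
    apply Real.one_le_rpow_of_pos_of_le_one_of_nonpos hc0 hc1
    rw [neg_div]
    have : 0 < 1 / (β * (1 - β)) := by positivity
    linarith
  have hk0 : (0:ℝ) < k := by linarith
  have hck : 1 / c ≤ (k:ℝ) ^ (1 - β) := by
    have h1 := Real.rpow_le_rpow (by positivity) hk hb1.le
    rw [← Real.rpow_mul hc0.le] at h1
    refine le_trans ?_ h1
    rw [one_div, ← Real.rpow_neg_one]
    apply Real.rpow_le_rpow_of_exponent_ge hc0 hc1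
    have : -1 / (β * (1-β)) * (1-β) = -(1/β) := by field_simp
    rw [this]
    have : 1 ≤ 1 / β := by rw [le_div_iff₀ hβ0]; linarith
    linarith
  have hDk : ∀ x : ℝ, 0 ≤ x → x ≤ (M + 3 + b) * k → x ^ β ≤ D * (k:ℝ)^β := by
    intro x h0 h
    rw [hD, ← Real.mul_rpow (by positivity) hk0.le]
    exact Real.rpow_le_rpow h0 h hβ0.le
  have hbig : ∀ j, 2 * (u (j+1) - u j) ≤ c * α ∨ u (j+1) ≤ D * (k:ℝ)^β := by
    intro j
    by_cases h : 2 * (u (j+1) - u j) ≤ c * α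
    · exact Or.inl h
    right
    push Not at h
    have hxj := hx j
    have h1 : c * α < 2 * (β * u j / ((j:ℝ) + b)) := by have := hd j; linarith
    have e : ((j:ℝ)+b) = u j * ((j:ℝ)+b) ^ (1-β) := by
      simp only [hu]
      rw [← Real.rpow_add hxj]; simp
    have h2 : ((j:ℝ)+b) ^ (1-β) ≤ (2 * β / α) * (k:ℝ)^(1-β) := by
      have e2 : β * u j / ((j:ℝ) + b) = β / ((j:ℝ)+b) ^ (1-β) := by
        have hne := (hu0 j).ne'
        have hp : 0 < ((j:ℝ)+b) ^ (1-β) := by positivity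
        rw [div_eq_div_iff hxj.ne' hp.ne']
        nth_rewrite 2 [e]
        ring
      have hp : 0 < ((j:ℝ)+b) ^ (1-β) := by positivity
      rw [e2, ← mul_div_assoc, lt_div_iff₀ hp] at h1
      calc ((j:ℝ)+b) ^ (1-β) ≤ (2 * β / α) * (1 / c) := by
            rw [div_mul_div_comm, le_div_iff₀ (by positivity)]; linarith
        _ ≤ _ := by gcongr
    have h3 : (j:ℝ)+b ≤ M * k := by
      have := Real.rpow_le_rpow (by positivity) h2 (z := 1/(1-β)) (by positivity)
      rw [Real.mul_rpow (by positivity) (by positivity), ← Real.rpow_mul hxj.le,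
        ← Real.rpow_mul hk0.le, mul_one_div_cancel hb1.ne', Real.rpow_one, Real.rpow_one] at this
      exact this
    apply hDk
    · exact (hx _).le
    · push_cast; nlinarith
  -- the scalar products
  set v : ℕ → ℝ := fun l => u (k+1+1+l) with hv
  let p : ℕ → ℝ := fun l => ∏ s ∈ Finset.range l, (1 - c * α / v s)
  have hp1 : ∀ l, p (l+1) = p l * (1 - c * α / v l) := fun l => Finset.prod_range_succ _ _
  have hst : ∀ j, ‖(1 : Matrix n n ℝ) - (α / u j) • A‖ ≤ 1 - c * α / u j := by
    intro j
    rw [mul_div_assoc]; exact hstep j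
  have hv0 : v 0 ≤ D * (k:ℝ)^β := by
    apply hDk
    · exact (hx _).le
    · push_cast; nlinarith
  have hS := scal_inv v p (c * α) (D * (k:ℝ)^β) (fun l => hu0 _) (fun l => hmono _)
    (by simp [p]) hp1 (by positivity) (fun l => (norm_nonneg _).trans (hst _)) hv0
    (fun l => hbig _)
  have hMB := mat_bound normInf_one A v
    (fun l => prodIco A (fun j => α / u j) (k+1+1) (k+1+1+l)) p α (2 * (D * (k:ℝ)^β))
    (fun l => hu0 _) (fun l => hmono _) (prodIco_zero _ _ _)
    (fun l => prodIco_right _ _ _ _) (by simp [p]) (fun l => (hS l).1.1)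
    (fun l => by
      rw [hp1, mul_comm]
      exact mul_le_mul_of_nonneg_left (hst _) (hS l).1.1) m (hS m).2
  rw [Psi_rec A u α hu0 k m]
  set P := Psi A (fun j => α / u j) (k+1) (k+1+m) with hP
  have hkb : (0:ℝ) < (k:ℝ)^β := by positivity
  have huk : ∀ j, k ≤ j → (k:ℝ)^β ≤ u j := by
    intro j hj
    apply Real.rpow_le_rpow hk0.le _ hβ0.le
    have : (k:ℝ) ≤ j := by exact_mod_cast hj
    linarith
  have hAP : ‖A * P‖ ≤ 3 * D := by
    have e : A * P = (1 / u (k+1)) • (α • (A * ∑ l ∈ Finset.range m,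
        prodIco A (fun j => α / u j) (k+1+1) (k+1+1+l))) := by
      rw [hP, Psi_eq, mul_smul_comm, smul_smul]
      congr 1
      ring
    have h1 := huk (k+1) (by omega)
    rw [e, norm_smul, Real.norm_of_nonneg (one_div_pos.2 (hu0 _)).le, one_div_mul_eq_div,
      div_le_iff₀ (hu0 _)]
    have : D * (k:ℝ)^β ≤ D * u (k+1) := by gcongr
    linarith
  have hIAP : ‖1 - A * P‖ ≤ 1 + 3 * D :=
    (norm_sub_le _ _).trans (add_le_add normInf_one hAP)
  have hPn : ‖P‖ ≤ (k:ℝ)^(1-β) * (3 * D) := by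
    have e : P = A⁻¹ * (A * P) := by
      rw [← mul_assoc, Matrix.nonsing_inv_mul _ ((Matrix.isUnit_iff_isUnit_det A).1 hA), one_mul]
    rw [e]
    exact (norm_mul_le _ _).trans
      (mul_le_mul (hinv.trans hck) hAP (norm_nonneg _) (by positivity))
  have hr0 : 0 ≤ (u (k+1) - u k) / u k :=
    div_nonneg (by have := hmono k; linarith) (hu0 k).le
  have hr : (u (k+1) - u k) / u k ≤ 1 / k := by
    rw [div_le_iff₀ (hu0 k)]
    refine (hd k).trans ?_
    rw [div_le_iff₀ (hx k)]
    have : 1 ≤ 1 / (k:ℝ) * (k + b) := by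
      rw [one_div_mul_eq_div, le_div_iff₀ hk0]; linarith
    have h2 := hu0 k
    calc β * u k ≤ 1 * u k := by gcongr
      _ ≤ (1 / (k:ℝ) * (k + b)) * u k := by gcongr
      _ = _ := by ring
  have hkk : 1 / (k:ℝ) * (k:ℝ)^(1-β) = 1 / (k:ℝ)^β := by
    rw [Real.rpow_sub hk0, Real.rpow_one]; field_simp
  calc _ ≤ ‖((u (k+1) - u k) / u k) • P‖ + ‖(α / u k) • (1 - A * P)‖ := by
        refine (norm_sub_le _ _).trans ?_
        rw [norm_neg]
    _ ≤ 1 / k * ((k:ℝ)^(1-β) * (3 * D)) + α / (k:ℝ)^β * (1 + 3 * D) := by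
        rw [norm_smul, norm_smul, Real.norm_of_nonneg hr0,
          Real.norm_of_nonneg (div_pos hα (hu0 k)).le]
        have := huk k le_rfl
        gcongr
    _ = (3 * D + α * (1 + 3 * D)) / (k:ℝ)^β := by
        rw [← mul_assoc, hkk]; ring
    _ ≤ _ := by
        gcongr
        linarith

end
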